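/- Let (X, 𝒜, μ) be a measure space, q ∈ [1,2), κ ∈ (0,1), and let w, w₁, w₂ : X → ℂ be measurable functions such that w·w₁ and w·w₂ are each nonzero on a set of positive measure, and w = 0 on the set {x ∈ X : w₁(x) = 0 and w₂(x) = 0}. Define M₁ = sup{ ‖φw‖_{L^q} / (‖φw₁‖_{L²}^κ · ‖φw₂‖_{L²}^{1-κ}) : φ measurable, φw₁, φw₂ ∈ L²(X), each nonzero on a set of positive measure } and M₂ = sup_{t>0} ( t^{(1-κ)/2} ‖ w / (|w₁|² + t|w₂|²)^{1/2} ‖_{L^{2q/(2-q)}} ), with the convention 0/0 = 0. Then M₁ ≤ (1-κ)^{(κ-1)/2} κ^{-κ/2} M₂. Moreover, if μ is σ-finite, or if there exists t* > 0 such that w·(|w₁|² + t*|w₂|²)^{-1/2} ∈ L^{2q/(2-q)}(X), then M₁ = (1-κ)^{(κ-1)/2} κ^{-κ/2} M₂. -/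

import Mathlib

open MeasureTheory

noncomputable section

/-- `M₁ = sup over admissible φ of ‖φw‖_{L^q} / (‖φw₁‖_{L²}^κ ‖φw₂‖_{L²}^{1-κ})`,
where φ ranges over measurable functions with `φw₁, φw₂ ∈ L²` each nonzero on a set of
positive measure. -/
def M1 {X : Type*} [MeasurableSpace X] (μ : Measure X) (q κ : ℝ) (w w₁ w₂ : X → ℂ) :
    ENNReal :=
  ⨆ (φ : X → ℂ) (_ : Measurable φ ∧
      MemLp (fun x => φ x * w₁ x) 2 μ ∧ MemLp (fun x => φ x * w₂ x) 2 μ ∧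
      μ {x | φ x * w₁ x ≠ 0} ≠ 0 ∧ μ {x | φ x * w₂ x ≠ 0} ≠ 0),
    eLpNorm (fun x => φ x * w x) (ENNReal.ofReal q) μ /
      (eLpNorm (fun x => φ x * w₁ x) 2 μ ^ κ *
        eLpNorm (fun x => φ x * w₂ x) 2 μ ^ (1 - κ))

/-- `M₂ = sup_{t>0} t^{(1-κ)/2} ‖ w / (|w₁|² + t|w₂|²)^{1/2} ‖_{L^{2q/(2-q)}}`
(with the convention `0/0 = 0`, which is the Lean convention for complex division). -/
def M2 {X : Type*} [MeasurableSpace X] (μ : Measure X) (q κ : ℝ) (w w₁ w₂ : X → ℂ) :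
    ENNReal :=
  ⨆ (t : ℝ) (_ : 0 < t),
    ENNReal.ofReal (t ^ ((1 - κ) / 2)) *
      eLpNorm (fun x => w x / ((Real.sqrt (‖w₁ x‖ ^ 2 + t * ‖w₂ x‖ ^ 2) : ℝ) : ℂ))
        (ENNReal.ofReal (2 * q / (2 - q))) μ

/-- the denominator -/
def gden {X : Type*} (w₁ w₂ : X → ℂ) (t : ℝ) (x : X) : ℝ :=
  Real.sqrt (‖w₁ x‖ ^ 2 + t * ‖w₂ x‖ ^ 2)

lemma gden_nonneg {X : Type*} (w₁ w₂ : X → ℂ) (t : ℝ) (x : X) : 0 ≤ gden w₁ w₂ t x :=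
  Real.sqrt_nonneg _

lemma gden_sq {X : Type*} (w₁ w₂ : X → ℂ) (t : ℝ) (ht : 0 < t) (x : X) :
    gden w₁ w₂ t x ^ 2 = ‖w₁ x‖ ^ 2 + t * ‖w₂ x‖ ^ 2 := by
  unfold gden
  rw [Real.sq_sqrt]; positivity

lemma gden_measurable {X : Type*} [MeasurableSpace X] {w₁ w₂ : X → ℂ} (hw₁ : Measurable w₁)
    (hw₂ : Measurable w₂) (t : ℝ) : Measurable (gden w₁ w₂ t) := by
  unfold gden
  fun_prop

lemma eLpNorm_two_sq {X : Type*} [MeasurableSpace X] (μ : Measure X) (f : X → ℂ) :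
    eLpNorm f 2 μ ^ 2 = ∫⁻ x, ‖f x‖ₑ ^ 2 ∂μ := by
  have := eLpNorm_nnreal_pow_eq_lintegral (f := f) (μ := μ) (p := 2) (by norm_num)
  simpa using this

lemma eLpNorm_ofReal_rpow {X : Type*} [MeasurableSpace X] (μ : Measure X) (f : X → ℂ) (p : ℝ)
    (hp : 0 < p) :
    eLpNorm f (ENNReal.ofReal p) μ = (∫⁻ x, ‖f x‖ₑ ^ p ∂μ) ^ (1 / p) := by
  rw [eLpNorm_eq_lintegral_rpow_enorm_toReal (by simpa using hp) (by simp),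
    ENNReal.toReal_ofReal hp.le]

lemma norm_sq_id {X : Type*} [MeasurableSpace X] (μ : Measure X) (φ w₁ w₂ : X → ℂ)
    (hφ : Measurable φ) (hw₁ : Measurable w₁) (hw₂ : Measurable w₂) (t : ℝ) (ht : 0 < t) :
    eLpNorm (fun x => φ x * (gden w₁ w₂ t x : ℂ)) 2 μ ^ 2 =
      eLpNorm (fun x => φ x * w₁ x) 2 μ ^ 2 +
        ENNReal.ofReal t * eLpNorm (fun x => φ x * w₂ x) 2 μ ^ 2 := by
  simp only [eLpNorm_two_sq]
  rw [← lintegral_const_mul _ (by fun_prop), ← lintegral_add_left (by fun_prop)]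
  refine lintegral_congr fun x => ?_
  have key : ‖φ x * (gden w₁ w₂ t x : ℂ)‖ ^ 2 = ‖φ x * w₁ x‖ ^ 2 + t * ‖φ x * w₂ x‖ ^ 2 := by
    simp only [norm_mul, mul_pow, Complex.norm_real, Real.norm_eq_abs, sq_abs, gden_sq _ _ _ ht]
    ring
  simp only [← ofReal_norm_eq_enorm]
  rw [← ENNReal.ofReal_pow (norm_nonneg _), ← ENNReal.ofReal_pow (norm_nonneg _),
    ← ENNReal.ofReal_pow (norm_nonneg _), ← ENNReal.ofReal_mul ht.le,
    ← ENNReal.ofReal_add (by positivity) (by positivity), key]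

/-- the constant -/
def Cst (κ : ℝ) : ℝ := (1 - κ) ^ ((κ - 1) / 2) * κ ^ (-(κ / 2))

lemma Cst_nonneg (κ : ℝ) (h0 : 0 < κ) (h1 : κ < 1) : 0 ≤ Cst κ := by
  have : 0 < 1 - κ := by linarith
  unfold Cst; positivity

lemma Cst_sq_mul (κ t a b : ℝ) (h0 : 0 < κ) (h1 : κ < 1) (ht : 0 < t) (ha : 0 ≤ a)
    (hb : 0 ≤ b) :
    (Cst κ * t ^ ((1 - κ) / 2) * (a ^ κ * b ^ (1 - κ))) ^ 2 =
      (a ^ 2 / κ) ^ κ * (t * b ^ 2 / (1 - κ)) ^ (1 - κ) := by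
  have h1' : 0 < 1 - κ := by linarith
  unfold Cst
  rw [Real.div_rpow (by positivity) h0.le, Real.div_rpow (by positivity) h1'.le,
    Real.mul_rpow ht.le (by positivity), div_eq_mul_inv ((a ^ 2) ^ κ),
    div_eq_mul_inv (t ^ (1 - κ) * (b ^ 2) ^ (1 - κ)),
    ← Real.rpow_neg h0.le, ← Real.rpow_neg h1'.le]
  simp only [mul_pow]
  have e : ∀ (x r : ℝ), 0 ≤ x → (x ^ r) ^ 2 = x ^ (r * 2) := fun x r hx => by
    rw [Real.rpow_mul hx]; norm_num
  have e2 : ∀ (x r : ℝ), 0 ≤ x → (x ^ 2) ^ r = x ^ (r * 2) := fun x r hx => by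
    rw [mul_comm, Real.rpow_mul hx]; norm_num
  rw [e _ _ h1'.le, e _ _ h0.le, e _ _ ht.le, e _ _ ha, e _ _ hb, e2 _ _ ha, e2 _ _ hb]
  rw [show (κ - 1) / 2 * 2 = -(1 - κ) by ring, show -(κ / 2) * 2 = -κ by ring,
    show (1 - κ) / 2 * 2 = 1 - κ by ring]
  ring

lemma amgm_real (κ t a b : ℝ) (h0 : 0 < κ) (h1 : κ < 1) (ht : 0 < t) (ha : 0 ≤ a)
    (hb : 0 ≤ b) :
    (Cst κ * t ^ ((1 - κ) / 2) * (a ^ κ * b ^ (1 - κ))) ^ 2 ≤ a ^ 2 + t * b ^ 2 := by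
  have h1' : 0 < 1 - κ := by linarith
  rw [Cst_sq_mul κ t a b h0 h1 ht ha hb]
  have := Real.geom_mean_le_arith_mean2_weighted h0.le h1'.le
    (show 0 ≤ a ^ 2 / κ by positivity) (show 0 ≤ t * b ^ 2 / (1 - κ) by positivity) (by ring)
  refine this.trans (le_of_eq ?_)
  field_simp

lemma amgm_real_eq (κ a b : ℝ) (h0 : 0 < κ) (h1 : κ < 1) (ha : 0 < a)
    (hb : 0 < b) : ∃ t : ℝ, 0 < t ∧
    (Cst κ * t ^ ((1 - κ) / 2) * (a ^ κ * b ^ (1 - κ))) ^ 2 = a ^ 2 + t * b ^ 2 := by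
  have h1' : 0 < 1 - κ := by linarith
  have ht : 0 < a ^ 2 * (1 - κ) / (κ * b ^ 2) := by positivity
  refine ⟨_, ht, ?_⟩
  rw [Cst_sq_mul κ _ a b h0 h1 ht ha.le hb.le]
  have : a ^ 2 * (1 - κ) / (κ * b ^ 2) * b ^ 2 / (1 - κ) = a ^ 2 / κ := by field_simp
  rw [this, ← Real.rpow_add (by positivity)]
  have : κ + (1 - κ) = 1 := by ring
  rw [this, Real.rpow_one]
  field_simp
  ring

lemma lift_eq (κ t : ℝ) (A B : ENNReal) (h0 : 0 < κ) (h1 : κ < 1)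
    (hA : A ≠ ⊤) (hB : B ≠ ⊤) :
    ENNReal.ofReal (Cst κ * t ^ ((1 - κ) / 2) * (A.toReal ^ κ * B.toReal ^ (1 - κ))) =
    ENNReal.ofReal (Cst κ) * ENNReal.ofReal (t ^ ((1 - κ) / 2)) * (A ^ κ * B ^ (1 - κ)) := by
  have h1' : 0 < 1 - κ := by linarith
  have hc := Cst_nonneg κ h0 h1
  rw [ENNReal.ofReal_mul' (by positivity), ENNReal.ofReal_mul hc,
    ENNReal.ofReal_mul (by positivity),
    ← ENNReal.ofReal_rpow_of_nonneg ENNReal.toReal_nonneg h0.le,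
    ← ENNReal.ofReal_rpow_of_nonneg ENNReal.toReal_nonneg h1'.le,
    ENNReal.ofReal_toReal hA, ENNReal.ofReal_toReal hB]

lemma lift_rhs (t : ℝ) (A B : ENNReal) (ht : 0 < t) (hA : A ≠ ⊤) (hB : B ≠ ⊤) :
    ENNReal.ofReal (A.toReal ^ 2 + t * B.toReal ^ 2) = A ^ 2 + ENNReal.ofReal t * B ^ 2 := by
  rw [ENNReal.ofReal_add (by positivity) (by positivity), ENNReal.ofReal_mul ht.le,
    ENNReal.ofReal_pow ENNReal.toReal_nonneg, ENNReal.ofReal_pow ENNReal.toReal_nonneg,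
    ENNReal.ofReal_toReal hA, ENNReal.ofReal_toReal hB]

lemma amgm_ennreal (κ t : ℝ) (A B G : ENNReal) (h0 : 0 < κ) (h1 : κ < 1) (ht : 0 < t)
    (hA : A ≠ ⊤) (hB : B ≠ ⊤) (hG : G ^ 2 = A ^ 2 + ENNReal.ofReal t * B ^ 2) :
    ENNReal.ofReal (Cst κ) * ENNReal.ofReal (t ^ ((1 - κ) / 2)) * (A ^ κ * B ^ (1 - κ)) ≤ G := by
  rw [← ENNReal.pow_le_pow_left_iff (two_ne_zero), hG, ← lift_rhs t A B ht hA hB,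
    ← lift_eq κ t A B h0 h1 hA hB, ← ENNReal.ofReal_pow]
  · exact ENNReal.ofReal_le_ofReal (amgm_real κ t _ _ h0 h1 ht ENNReal.toReal_nonneg
      ENNReal.toReal_nonneg)
  · have hc := Cst_nonneg κ h0 h1
    positivity

lemma amgm_ennreal_eq (κ : ℝ) (A B : ENNReal) (h0 : 0 < κ) (h1 : κ < 1)
    (hA : A ≠ ⊤) (hB : B ≠ ⊤) (hA0 : A ≠ 0) (hB0 : B ≠ 0) :
    ∃ t : ℝ, 0 < t ∧ ∀ G : ENNReal, G ^ 2 = A ^ 2 + ENNReal.ofReal t * B ^ 2 →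
    G = ENNReal.ofReal (Cst κ) * ENNReal.ofReal (t ^ ((1 - κ) / 2)) * (A ^ κ * B ^ (1 - κ)) := by
  obtain ⟨t, ht, h⟩ := amgm_real_eq κ A.toReal B.toReal h0 h1 (ENNReal.toReal_pos hA0 hA)
    (ENNReal.toReal_pos hB0 hB)
  refine ⟨t, ht, fun G hG => ?_⟩
  rw [← (ENNReal.pow_right_strictMono two_ne_zero).injective.eq_iff]
  rw [hG, ← lift_rhs t A B ht hA hB, ← lift_eq κ t A B h0 h1 hA hB, ← ENNReal.ofReal_pow, h]
  have hc := Cst_nonneg κ h0 h1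
  positivity

lemma eLpNorm_ne_zero_of {X : Type*} [MeasurableSpace X] (μ : Measure X) (f : X → ℂ)
    (hf : Measurable f) (h : μ {x | f x ≠ 0} ≠ 0) : eLpNorm f 2 μ ≠ 0 := by
  rw [Ne, eLpNorm_eq_zero_iff hf.aestronglyMeasurable (by norm_num)]
  intro h'
  exact h (by simpa [Filter.EventuallyEq, ae_iff] using h')

lemma upper {X : Type*} [MeasurableSpace X] (μ : Measure X) (q κ : ℝ)
    (hq1 : 1 ≤ q) (hq2 : q < 2) (hκ0 : 0 < κ) (hκ1 : κ < 1)
    (w w₁ w₂ : X → ℂ) (hw : Measurable w) (hw₁ : Measurable w₁) (hw₂ : Measurable w₂)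
    (h0 : ∀ x, w₁ x = 0 → w₂ x = 0 → w x = 0) :
    M1 μ q κ w w₁ w₂ ≤ ENNReal.ofReal (Cst κ) * M2 μ q κ w w₁ w₂ := by
  unfold M1
  refine iSup₂_le fun φ hφ => ?_
  obtain ⟨hφ, hm1, hm2, hn1, hn2⟩ := hφ
  have hA0 := eLpNorm_ne_zero_of μ (fun x => φ x * w₁ x) (by fun_prop) hn1
  have hB0 := eLpNorm_ne_zero_of μ (fun x => φ x * w₂ x) (by fun_prop) hn2
  have hA := hm1.eLpNorm_ne_top
  have hB := hm2.eLpNorm_ne_top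
  obtain ⟨t, ht, hG⟩ := amgm_ennreal_eq κ _ _ hκ0 hκ1 hA hB hA0 hB0
  have hG := hG _ (norm_sq_id μ φ w₁ w₂ hφ hw₁ hw₂ t ht)
  refine ENNReal.div_le_of_le_mul ?_
  have hgm := gden_measurable hw₁ hw₂ t
  have hT : ENNReal.HolderTriple 2 (ENNReal.ofReal (2 * q / (2 - q))) (ENNReal.ofReal q) := by
    constructor
    have h2q : 0 < 2 - q := by linarith
    have hp : 0 < 2 * q / (2 - q) := by positivity
    rw [show (2 : ENNReal) = ENNReal.ofReal 2 by simp, ← ENNReal.ofReal_inv_of_pos (by norm_num),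
      ← ENNReal.ofReal_inv_of_pos hp, ← ENNReal.ofReal_inv_of_pos (by linarith),
      ← ENNReal.ofReal_add (by positivity) (by positivity)]
    congr 1
    field_simp
    ring
  have hH := eLpNorm_smul_le_mul_eLpNorm (μ := μ) (p := 2)
    (q := ENNReal.ofReal (2 * q / (2 - q))) (r := ENNReal.ofReal q)
    (f := fun x => w x / (gden w₁ w₂ t x : ℂ)) (φ := fun x => φ x * (gden w₁ w₂ t x : ℂ))
    (by fun_prop : Measurable fun x => w x / (gden w₁ w₂ t x : ℂ)).aestronglyMeasurable
    (by fun_prop)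
  have hfe : ((fun x => φ x * (gden w₁ w₂ t x : ℂ)) • fun x => w x / (gden w₁ w₂ t x : ℂ)) =
      fun x => φ x * w x := by
    ext x
    simp only [Pi.smul_apply', smul_eq_mul]
    by_cases hg : gden w₁ w₂ t x = 0
    · have := gden_sq w₁ w₂ t ht x
      rw [hg] at this
      have e1 : ‖w₁ x‖ ^ 2 = 0 := by nlinarith [sq_nonneg ‖w₁ x‖, mul_nonneg ht.le (sq_nonneg ‖w₂ x‖)]
      have e2 : t * ‖w₂ x‖ ^ 2 = 0 := by nlinarith
      have := h0 x (by simpa using e1) (by simpa [ht.ne'] using e2)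
      simp [this]
    · have : (gden w₁ w₂ t x : ℂ) ≠ 0 := by exact_mod_cast hg
      field_simp
  rw [hfe, hG] at hH
  refine hH.trans ?_
  have hM : ENNReal.ofReal (t ^ ((1 - κ) / 2)) * eLpNorm (fun x => w x / (gden w₁ w₂ t x : ℂ))
      (ENNReal.ofReal (2 * q / (2 - q))) μ ≤ M2 μ q κ w w₁ w₂ := by
    unfold M2
    exact le_iSup₂ (f := fun (t : ℝ) (_ : 0 < t) => ENNReal.ofReal (t ^ ((1 - κ) / 2)) *
      eLpNorm (fun x => w x / ((Real.sqrt (‖w₁ x‖ ^ 2 + t * ‖w₂ x‖ ^ 2) : ℝ) : ℂ))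
        (ENNReal.ofReal (2 * q / (2 - q))) μ) t ht
  calc _ = ENNReal.ofReal (Cst κ) * (ENNReal.ofReal (t ^ ((1 - κ) / 2)) *
        eLpNorm (fun x => w x / (gden w₁ w₂ t x : ℂ)) (ENNReal.ofReal (2 * q / (2 - q))) μ) *
        (eLpNorm (fun x => φ x * w₁ x) 2 μ ^ κ *
        eLpNorm (fun x => φ x * w₂ x) 2 μ ^ (1 - κ)) := by ring
    _ ≤ _ := by gcongr

lemma gden_pos {X : Type*} (w₁ w₂ : X → ℂ) (t : ℝ) (ht : 0 < t) (x : X)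
    (h : w₁ x ≠ 0 ∨ w₂ x ≠ 0) : 0 < gden w₁ w₂ t x := by
  unfold gden
  apply Real.sqrt_pos.2
  rcases h with h | h
  · have := norm_pos_iff.2 h
    positivity
  · have := norm_pos_iff.2 h
    positivity

/-- the extremal function -/
def ext0 {X : Type*} (p : ℝ) (w w₁ w₂ : X → ℂ) (t : ℝ) (x : X) : ℂ :=
  (((‖w x‖ / gden w₁ w₂ t x) ^ (p / 2) / gden w₁ w₂ t x : ℝ) : ℂ)

lemma ext0_w {X : Type*} (p q : ℝ) (hp : 0 < p) (hq : 0 < q) (hpq : q * (p / 2 + 1) = p)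
    (w w₁ w₂ : X → ℂ) (t : ℝ) (x : X) :
    ‖ext0 p w w₁ w₂ t x * w x‖ₑ ^ q = ‖w x / (gden w₁ w₂ t x : ℂ)‖ₑ ^ p := by
  have hg := gden_nonneg w₁ w₂ t x
  simp only [← ofReal_norm_eq_enorm]
  rw [ENNReal.ofReal_rpow_of_nonneg (norm_nonneg _) hq.le,
    ENNReal.ofReal_rpow_of_nonneg (norm_nonneg _) hp.le]
  congr 1
  rw [norm_mul, norm_div, ext0, Complex.norm_real, Complex.norm_real, Real.norm_of_nonneg hg,
    Real.norm_of_nonneg (by positivity)]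
  set u := ‖w x‖ / gden w₁ w₂ t x with hu
  have hu0 : 0 ≤ u := by positivity
  rw [show u ^ (p / 2) / gden w₁ w₂ t x * ‖w x‖ = u ^ (p / 2) * u by rw [hu]; ring,
    ← Real.rpow_add_one' hu0 (by positivity), ← Real.rpow_mul hu0, mul_comm, hpq]

lemma ext0_g {X : Type*} (p : ℝ) (hp : 0 < p)
    (w w₁ w₂ : X → ℂ) (t : ℝ) (x : X) :
    ‖ext0 p w w₁ w₂ t x * (gden w₁ w₂ t x : ℂ)‖ₑ ^ 2 = ‖w x / (gden w₁ w₂ t x : ℂ)‖ₑ ^ p := by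
  have hg := gden_nonneg w₁ w₂ t x
  simp only [← ofReal_norm_eq_enorm]
  rw [← ENNReal.ofReal_pow (norm_nonneg _),
    ENNReal.ofReal_rpow_of_nonneg (norm_nonneg _) hp.le]
  congr 1
  rw [norm_mul, norm_div, ext0, Complex.norm_real, Complex.norm_real, Real.norm_of_nonneg hg,
    Real.norm_of_nonneg (by positivity)]
  by_cases h : gden w₁ w₂ t x = 0
  · simp [h, hp.ne']
  · rw [div_mul_cancel₀ _ h, ← Real.rpow_natCast, ← Real.rpow_mul (by positivity)]
    norm_num

lemma ext0_ne {X : Type*} (p : ℝ)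
    (w w₁ w₂ : X → ℂ) (t : ℝ) (ht : 0 < t) (x : X) (hw : w x ≠ 0) (h : w₁ x ≠ 0 ∨ w₂ x ≠ 0) :
    ext0 p w w₁ w₂ t x ≠ 0 := by
  have := gden_pos w₁ w₂ t ht x h
  have hw := norm_pos_iff.2 hw
  unfold ext0
  rw [Complex.ofReal_ne_zero]
  positivity

lemma lower {X : Type*} [MeasurableSpace X] (μ : Measure X) (q κ p : ℝ)
    (hq1 : 1 ≤ q) (hp : 0 < p) (hpq : q * (p / 2 + 1) = p) (hκ0 : 0 < κ) (hκ1 : κ < 1)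
    (w w₁ w₂ : X → ℂ) (hw : Measurable w) (hw₁ : Measurable w₁) (hw₂ : Measurable w₂)
    (t : ℝ) (ht : 0 < t) (E : Set X) (hE : MeasurableSet E)
    (h1 : μ (E ∩ {x | w x * w₁ x ≠ 0}) ≠ 0) (h2 : μ (E ∩ {x | w x * w₂ x ≠ 0}) ≠ 0)
    (hfin : ∫⁻ x in E, ‖w x / (gden w₁ w₂ t x : ℂ)‖ₑ ^ p ∂μ ≠ ⊤) :
    ENNReal.ofReal (Cst κ) * (ENNReal.ofReal (t ^ ((1 - κ) / 2)) *
      (∫⁻ x in E, ‖w x / (gden w₁ w₂ t x : ℂ)‖ₑ ^ p ∂μ) ^ (1 / p)) ≤ M1 μ q κ w w₁ w₂ := by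
  have hgm := gden_measurable hw₁ hw₂ t
  have hq : 0 < q := by linarith
  set φ : X → ℂ := E.indicator (ext0 p w w₁ w₂ t) with hφdef
  have hφ : Measurable φ := by
    refine Measurable.indicator ?_ hE
    unfold ext0
    fun_prop
  set I := ∫⁻ x in E, ‖w x / (gden w₁ w₂ t x : ℂ)‖ₑ ^ p ∂μ with hI
  have hW : eLpNorm (fun x => φ x * w x) (ENNReal.ofReal q) μ = I ^ (1 / q) := by
    rw [eLpNorm_ofReal_rpow _ _ _ hq, hI, ← lintegral_indicator hE]
    congr 1
    refine lintegral_congr fun x => ?_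
    by_cases hx : x ∈ E
    · simp only [hφdef, Set.indicator_of_mem hx]
      exact ext0_w p q hp hq hpq w w₁ w₂ t x
    · simp [hφdef, Set.indicator_of_notMem hx, hq]
  have hG2 : eLpNorm (fun x => φ x * (gden w₁ w₂ t x : ℂ)) 2 μ ^ 2 = I := by
    rw [eLpNorm_two_sq, hI, ← lintegral_indicator hE]
    refine lintegral_congr fun x => ?_
    by_cases hx : x ∈ E
    · simp only [hφdef, Set.indicator_of_mem hx]
      exact ext0_g p hp w w₁ w₂ t x
    · simp [hφdef, Set.indicator_of_notMem hx]
  have hid := norm_sq_id μ φ w₁ w₂ hφ hw₁ hw₂ t ht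
  set G := eLpNorm (fun x => φ x * (gden w₁ w₂ t x : ℂ)) 2 μ with hGdef
  set A := eLpNorm (fun x => φ x * w₁ x) 2 μ with hAdef
  set B := eLpNorm (fun x => φ x * w₂ x) 2 μ with hBdef
  have hsum : A ^ 2 + ENNReal.ofReal t * B ^ 2 ≠ ⊤ := by rw [← hid, hG2]; exact hfin
  have hA : A ≠ ⊤ := by
    intro h; rw [h] at hsum; simp at hsum
  have hB : B ≠ ⊤ := by
    intro h; rw [h] at hsum
    simp [ENNReal.mul_top, ht] at hsum
  have hn1 : μ {x | φ x * w₁ x ≠ 0} ≠ 0 := by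
    intro h
    refine h1 (measure_mono_null ?_ h)
    rintro x ⟨hx, hx'⟩
    have hx' : w x ≠ 0 ∧ w₁ x ≠ 0 := mul_ne_zero_iff.1 hx'
    simp only [Set.mem_setOf_eq, hφdef, Set.indicator_of_mem hx]
    exact mul_ne_zero (ext0_ne p w w₁ w₂ t ht x hx'.1 (Or.inl hx'.2)) hx'.2
  have hn2 : μ {x | φ x * w₂ x ≠ 0} ≠ 0 := by
    intro h
    refine h2 (measure_mono_null ?_ h)
    rintro x ⟨hx, hx'⟩
    have hx' : w x ≠ 0 ∧ w₂ x ≠ 0 := mul_ne_zero_iff.1 hx'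
    simp only [Set.mem_setOf_eq, hφdef, Set.indicator_of_mem hx]
    exact mul_ne_zero (ext0_ne p w w₁ w₂ t ht x hx'.1 (Or.inr hx'.2)) hx'.2
  have hA0 : A ≠ 0 := eLpNorm_ne_zero_of μ (fun x => φ x * w₁ x) (by fun_prop) hn1
  have hB0 : B ≠ 0 := eLpNorm_ne_zero_of μ (fun x => φ x * w₂ x) (by fun_prop) hn2
  have hle : eLpNorm (fun x => φ x * w x) (ENNReal.ofReal q) μ / (A ^ κ * B ^ (1 - κ)) ≤
      M1 μ q κ w w₁ w₂ := by
    unfold M1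
    exact le_iSup₂ (f := fun (φ : X → ℂ) (_ : Measurable φ ∧
      MemLp (fun x => φ x * w₁ x) 2 μ ∧ MemLp (fun x => φ x * w₂ x) 2 μ ∧
      μ {x | φ x * w₁ x ≠ 0} ≠ 0 ∧ μ {x | φ x * w₂ x ≠ 0} ≠ 0) =>
      eLpNorm (fun x => φ x * w x) (ENNReal.ofReal q) μ /
      (eLpNorm (fun x => φ x * w₁ x) 2 μ ^ κ *
        eLpNorm (fun x => φ x * w₂ x) 2 μ ^ (1 - κ))) φ
      ⟨hφ, ⟨(by fun_prop : Measurable fun x => φ x * w₁ x).aestronglyMeasurable, hA.lt_top⟩,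
        ⟨(by fun_prop : Measurable fun x => φ x * w₂ x).aestronglyMeasurable, hB.lt_top⟩,
        hn1, hn2⟩
  refine le_trans ?_ hle
  have h1κ : 0 < 1 - κ := by linarith
  have hD0 : A ^ κ * B ^ (1 - κ) ≠ 0 :=
    mul_ne_zero (by simp [ENNReal.rpow_eq_zero_iff, hA0, hA]) (by simp [ENNReal.rpow_eq_zero_iff, hB0, hB])
  have hDt : A ^ κ * B ^ (1 - κ) ≠ ⊤ :=
    ENNReal.mul_ne_top (ENNReal.rpow_ne_top_of_nonneg hκ0.le hA)
      (ENNReal.rpow_ne_top_of_nonneg h1κ.le hB)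
  rw [ENNReal.le_div_iff_mul_le (Or.inl hD0) (Or.inl hDt), hW]
  have ham := amgm_ennreal κ t A B G hκ0 hκ1 ht hA hB hid
  have hGI : G = I ^ (1 / 2 : ℝ) := by
    rw [← hG2, ← ENNReal.rpow_natCast, ← ENNReal.rpow_mul]; norm_num
  have hIq : I ^ (1 / q) = I ^ (1 / 2 : ℝ) * I ^ (1 / p) := by
    rw [← ENNReal.rpow_add_of_nonneg _ _ (by positivity) (by positivity)]
    congr 1
    field_simp
    linarith
  rw [hIq, ← hGI]
  calc _ = (ENNReal.ofReal (Cst κ) * ENNReal.ofReal (t ^ ((1 - κ) / 2)) * (A ^ κ * B ^ (1 - κ)))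
        * I ^ (1 / p) := by ring
    _ ≤ _ := by gcongr

lemma lower_fin {X : Type*} [MeasurableSpace X] (μ : Measure X) (q κ p : ℝ)
    (hq1 : 1 ≤ q) (hp : 0 < p) (hpq : q * (p / 2 + 1) = p) (hκ0 : 0 < κ) (hκ1 : κ < 1)
    (w w₁ w₂ : X → ℂ) (hw : Measurable w) (hw₁ : Measurable w₁) (hw₂ : Measurable w₂)
    (h1 : μ {x | w x * w₁ x ≠ 0} ≠ 0) (h2 : μ {x | w x * w₂ x ≠ 0} ≠ 0)
    (s : ℝ) (hs : 0 < s)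
    (hmem : MemLp (fun x => w x / (gden w₁ w₂ s x : ℂ)) (ENNReal.ofReal p) μ)
    (t : ℝ) (ht : 0 < t) :
    ENNReal.ofReal (Cst κ) * (ENNReal.ofReal (t ^ ((1 - κ) / 2)) *
      eLpNorm (fun x => w x / (gden w₁ w₂ t x : ℂ)) (ENNReal.ofReal p) μ) ≤
      M1 μ q κ w w₁ w₂ := by
  have hgm := gden_measurable hw₁ hw₂ t
  have hmt : MemLp (fun x => w x / (gden w₁ w₂ t x : ℂ)) (ENNReal.ofReal p) μ := by
    refine MemLp.of_le_mul (c := Real.sqrt (1 + s / t)) hmem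
      (by fun_prop : Measurable fun x => w x / (gden w₁ w₂ t x : ℂ)).aestronglyMeasurable ?_
    refine Filter.Eventually.of_forall fun x => ?_
    have hgs := gden_nonneg w₁ w₂ s x
    have hgt := gden_nonneg w₁ w₂ t x
    rw [norm_div, norm_div, Complex.norm_real, Complex.norm_real, Real.norm_of_nonneg hgs,
      Real.norm_of_nonneg hgt]
    by_cases h : w₁ x ≠ 0 ∨ w₂ x ≠ 0
    · have ps := gden_pos w₁ w₂ s hs x h
      have pt := gden_pos w₁ w₂ t ht x h
      rw [← mul_div_assoc, div_le_div_iff₀ pt ps]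
      have : gden w₁ w₂ s x ≤ Real.sqrt (1 + s / t) * gden w₁ w₂ t x := by
        unfold gden
        rw [← Real.sqrt_mul (by positivity)]
        refine Real.sqrt_le_sqrt ?_
        have e : (1 + s / t) * (‖w₁ x‖ ^ 2 + t * ‖w₂ x‖ ^ 2) =
          ‖w₁ x‖ ^ 2 + s * ‖w₂ x‖ ^ 2 + (s / t * ‖w₁ x‖ ^ 2 + t * ‖w₂ x‖ ^ 2) := by
          field_simp; ring
        rw [e]
        have : 0 ≤ s / t * ‖w₁ x‖ ^ 2 + t * ‖w₂ x‖ ^ 2 := by positivity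
        linarith
      nlinarith [norm_nonneg (w x)]
    · push Not at h
      simp [gden, h.1, h.2]
  have hE := eLpNorm_ofReal_rpow μ (fun x => w x / (gden w₁ w₂ t x : ℂ)) p hp
  have := lower μ q κ p hq1 hp hpq hκ0 hκ1 w w₁ w₂ hw hw₁ hw₂ t ht Set.univ MeasurableSet.univ
    (by simpa using h1) (by simpa using h2) (by
      have := hmt.eLpNorm_ne_top
      rw [hE] at this
      intro h
      rw [Measure.restrict_univ] at h
      rw [h] at this
      exact this (ENNReal.top_rpow_of_pos (by positivity)))
  rw [Measure.restrict_univ, ← hE] at this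
  exact this

lemma exists_pos_inter {X : Type*} [MeasurableSpace X] (μ : Measure X) (E : ℕ → Set X)
    (hm : Monotone E) (hU : ⋃ n, E n = Set.univ) (S : Set X) (hS : μ S ≠ 0) :
    ∃ N, ∀ n ≥ N, μ (E n ∩ S) ≠ 0 := by
  by_contra! h
  apply hS
  have : S = ⋃ n, E n ∩ S := by rw [← Set.iUnion_inter, hU, Set.univ_inter]
  rw [this]
  refine measure_iUnion_null fun n => ?_
  obtain ⟨m, hm', h⟩ := h n
  exact measure_mono_null (Set.inter_subset_inter_left _ (hm hm')) h

lemma lower_sigma {X : Type*} [MeasurableSpace X] (μ : Measure X) [SigmaFinite μ] (q κ p : ℝ)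
    (hq1 : 1 ≤ q) (hp : 0 < p) (hpq : q * (p / 2 + 1) = p) (hκ0 : 0 < κ) (hκ1 : κ < 1)
    (w w₁ w₂ : X → ℂ) (hw : Measurable w) (hw₁ : Measurable w₁) (hw₂ : Measurable w₂)
    (h1 : μ {x | w x * w₁ x ≠ 0} ≠ 0) (h2 : μ {x | w x * w₂ x ≠ 0} ≠ 0)
    (t : ℝ) (ht : 0 < t) :
    ENNReal.ofReal (Cst κ) * (ENNReal.ofReal (t ^ ((1 - κ) / 2)) *
      eLpNorm (fun x => w x / (gden w₁ w₂ t x : ℂ)) (ENNReal.ofReal p) μ) ≤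
      M1 μ q κ w w₁ w₂ := by
  have hgm := gden_measurable hw₁ hw₂ t
  set E : ℕ → Set X := fun n => spanningSets μ n ∩
    {x | ‖w x / (gden w₁ w₂ t x : ℂ)‖ₑ ^ p ≤ (n : ENNReal)} with hEdef
  have hEm : ∀ n, MeasurableSet (E n) := fun n =>
    (measurableSet_spanningSets μ n).inter (measurableSet_le (by fun_prop) (by fun_prop))
  have hmono : Monotone E := by
    intro m n hmn
    refine Set.inter_subset_inter (monotone_spanningSets μ hmn) ?_
    intro x hx
    have hx' : ‖w x / (gden w₁ w₂ t x : ℂ)‖ₑ ^ p ≤ (m : ENNReal) := hx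
    exact hx'.trans (by exact_mod_cast hmn : (m : ENNReal) ≤ n)
  have hU : ⋃ n, E n = Set.univ := by
    refine Set.eq_univ_of_forall fun x => ?_
    have hx : x ∈ ⋃ n, spanningSets μ n := by rw [iUnion_spanningSets]; trivial
    obtain ⟨n, hn⟩ := Set.mem_iUnion.1 hx
    obtain ⟨m, hm⟩ := ENNReal.exists_nat_gt
      (ENNReal.rpow_ne_top_of_nonneg hp.le (enorm_ne_top (x := w x / (gden w₁ w₂ t x : ℂ))))
    refine Set.mem_iUnion.2 ⟨max n m, monotone_spanningSets μ (le_max_left _ _) hn, ?_⟩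
    refine hm.le.trans ?_
    exact_mod_cast le_max_right n m
  obtain ⟨N1, hN1⟩ := exists_pos_inter μ E hmono hU _ h1
  obtain ⟨N2, hN2⟩ := exists_pos_inter μ E hmono hU _ h2
  have hfin : ∀ n, ∫⁻ x in E n, ‖w x / (gden w₁ w₂ t x : ℂ)‖ₑ ^ p ∂μ ≠ ⊤ := by
    intro n
    refine ne_top_of_le_ne_top (b := (n : ENNReal) * μ (E n)) ?_ ?_
    · refine ENNReal.mul_ne_top (by simp) ?_
      exact ((measure_mono Set.inter_subset_left).trans_lt (measure_spanningSets_lt_top μ n)).ne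
    · rw [← setLIntegral_const]
      exact setLIntegral_mono measurable_const fun x hx => hx.2
  have hsup : ∫⁻ x, ‖w x / (gden w₁ w₂ t x : ℂ)‖ₑ ^ p ∂μ =
      ⨆ n, ∫⁻ x in E n, ‖w x / (gden w₁ w₂ t x : ℂ)‖ₑ ^ p ∂μ := by
    rw [← setLIntegral_iUnion_of_directed _ hmono.directed_le, hU, Measure.restrict_univ]
  rw [eLpNorm_ofReal_rpow _ _ _ hp, hsup]
  have hr : (⨆ n, ∫⁻ x in E n, ‖w x / (gden w₁ w₂ t x : ℂ)‖ₑ ^ p ∂μ) ^ (1 / p) =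
      ⨆ n, (∫⁻ x in E n, ‖w x / (gden w₁ w₂ t x : ℂ)‖ₑ ^ p ∂μ) ^ (1 / p) := by
    exact (ENNReal.orderIsoRpow (1 / p) (by positivity)).map_iSup _
  rw [hr, ENNReal.mul_iSup, ENNReal.mul_iSup]
  refine iSup_le fun n => ?_
  set m := max n (max N1 N2) with hm
  have := lower μ q κ p hq1 hp hpq hκ0 hκ1 w w₁ w₂ hw hw₁ hw₂ t ht (E m) (hEm m)
    (hN1 m (by omega)) (hN2 m (by omega)) (hfin m)
  refine le_trans ?_ this
  gcongr
  exact hmono (by omega)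

/-- `M₁ ≤ (1-κ)^{(κ-1)/2} κ^{-κ/2} M₂`, with equality when `μ` is
σ-finite or when `w (|w₁|² + t₊|w₂|²)^{-1/2} ∈ L^{2q/(2-q)}` for some `t₊ > 0`. -/
theorem stmt0 {X : Type*} [MeasurableSpace X] (μ : Measure X) (q κ : ℝ)
    (hq1 : 1 ≤ q) (hq2 : q < 2) (hκ0 : 0 < κ) (hκ1 : κ < 1)
    (w w₁ w₂ : X → ℂ) (hw : Measurable w) (hw₁ : Measurable w₁) (hw₂ : Measurable w₂)
    (h1 : μ {x | w x * w₁ x ≠ 0} ≠ 0) (h2 : μ {x | w x * w₂ x ≠ 0} ≠ 0)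
    (h0 : ∀ x, w₁ x = 0 → w₂ x = 0 → w x = 0) :
    M1 μ q κ w w₁ w₂ ≤
      ENNReal.ofReal ((1 - κ) ^ ((κ - 1) / 2) * κ ^ (-(κ / 2))) * M2 μ q κ w w₁ w₂ ∧
    ((SigmaFinite μ ∨ ∃ t : ℝ, 0 < t ∧
        MemLp (fun x => w x / ((Real.sqrt (‖w₁ x‖ ^ 2 + t * ‖w₂ x‖ ^ 2) : ℝ) : ℂ))
          (ENNReal.ofReal (2 * q / (2 - q))) μ) →
      M1 μ q κ w w₁ w₂ =
        ENNReal.ofReal ((1 - κ) ^ ((κ - 1) / 2) * κ ^ (-(κ / 2))) * M2 μ q κ w w₁ w₂) := by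
  have hp : 0 < 2 * q / (2 - q) := div_pos (by linarith) (by linarith)
  have hpq : q * (2 * q / (2 - q) / 2 + 1) = 2 * q / (2 - q) := by
    have : (2 - q) ≠ 0 := by linarith
    field_simp
    ring
  have hup := upper μ q κ hq1 hq2 hκ0 hκ1 w w₁ w₂ hw hw₁ hw₂ h0
  refine ⟨hup, fun h => le_antisymm hup ?_⟩
  change ENNReal.ofReal (Cst κ) * M2 μ q κ w w₁ w₂ ≤ _
  unfold M2
  simp only [ENNReal.mul_iSup]
  refine iSup₂_le fun t ht => ?_
  rcases h with h | ⟨s, hs, hmem⟩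
  · exact lower_sigma μ q κ _ hq1 hp hpq hκ0 hκ1 w w₁ w₂ hw hw₁ hw₂ h1 h2 t ht
  · exact lower_fin μ q κ _ hq1 hp hpq hκ0 hκ1 w w₁ w₂ hw hw₁ hw₂ h1 h2 s hs hmem t ht

end
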